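/- Let {G, (Γ0, Γ1), (Γ̃0, Γ̃1)} be a generalized boundary triple for the adjoint pair {S, S̃} with core {T, T̃} of {S*, S̃*}, assume ρ(A0) ≠ ∅, and let γ, γ̃ and M, M̃ be the associated γ-fields and Weyl functions. Fix λ0 ∈ ρ(A0) ∩ ρ(Ã0). Then for every λ ∈ ρ(A0) and all h, k ∈ G: (M(λ)h, k)_G = (h, M̃(λ0)k)_G + (λ − λ̄0) ( γ(λ0)h + (λ − λ0)(A0 − λ)^{-1} γ(λ0)h , γ̃(λ0)k )_H. -/

import Mathlib

/-! The difference of the two solutions `γ(λ)h - γ(λ₀)h` lies in `ker Γ₀`, and `A₀ - λ` maps it to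
`(λ - λ₀) γ(λ₀)h`; applying the resolvent gives `γ(λ)h = γ(λ₀)h + (λ - λ₀)(A₀ - λ)⁻¹ γ(λ₀)h`
(`gamma_field_eq`). The claim is then the abstract Green identity for `γ(λ)h` and `γ̃(λ₀)k`, whose
left-hand side is `(λ - λ̄₀)(γ(λ)h, γ̃(λ₀)k)`. -/

open scoped ComplexInnerProductSpace

noncomputable section

/-- The inner product in the convention of the paper: linear in the *first* argument and
conjugate-linear in the second (the opposite of Mathlib's convention). -/
def pinner {E : Type*} [NormedAddCommGroup E] [InnerProductSpace ℂ E] (x y : E) : ℂ :=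
  ⟪y, x⟫

variable {H G : Type*}
  [NormedAddCommGroup H] [InnerProductSpace ℂ H] [CompleteSpace H]
  [NormedAddCommGroup G] [InnerProductSpace ℂ G] [CompleteSpace G]

/-- The restriction of a partially defined linear operator `T` in `H` to a submodule `p` of its
domain, viewed again as a partially defined linear operator in `H`. -/
def LinearPMap.restrictTo (T : H →ₗ.[ℂ] H) (p : Submodule ℂ T.domain) : H →ₗ.[ℂ] H where
  domain := p.map T.domain.subtype
  toFun := T.toFun ∘ₗ p.subtype ∘ₗ
    (Submodule.equivMapOfInjective T.domain.subtype (Submodule.injective_subtype _)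
      p).symm.toLinearMap

/-- `R` is the (everywhere defined, bounded) resolvent of the operator `A` at the point `lam`,
i.e. `R` is a two-sided inverse of `A - lam`. -/
def ResolventAt (A : H →ₗ.[ℂ] H) (lam : ℂ) (R : H →L[ℂ] H) : Prop :=
  (∀ x : A.domain, R (A x - lam • (x : H)) = (x : H)) ∧
  (∀ h : H, ∃ x : A.domain, (x : H) = R h ∧ A x - lam • (x : H) = h)

/-- `lam` belongs to the resolvent set of `A`: `A - lam` is a bijection of `dom A` onto `H`
with a bounded everywhere defined inverse. -/
def InResolventSet (A : H →ₗ.[ℂ] H) (lam : ℂ) : Prop :=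
  ∃ R : H →L[ℂ] H, ResolventAt A lam R

/-- `{G, (Γ0, Γ1), (Γt0, Γt1)}` is a generalized boundary triple for the adjoint pair `{S, St}`
with core `{T, Tt}` of `{S*, St*}`. -/
structure IsGeneralizedBoundaryTriple (S St T Tt : H →ₗ.[ℂ] H)
    (Γ0 Γ1 : T.domain →ₗ[ℂ] G) (Γt0 Γt1 : Tt.domain →ₗ[ℂ] G) : Prop where
  dense_S : Dense (S.domain : Set H)
  dense_St : Dense (St.domain : Set H)
  closed_S : S.IsClosed
  closed_St : St.IsClosed
  adjoint_pair : ∀ (f : S.domain) (g : St.domain),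
    pinner (S f) (g : H) = pinner (f : H) (St g)
  T_le : T ≤ S.adjoint
  Tt_le : Tt ≤ St.adjoint
  T_adjoint : T.adjoint = S
  Tt_adjoint : Tt.adjoint = St
  green : ∀ (f : T.domain) (g : Tt.domain),
    pinner (T f) (g : H) - pinner (f : H) (Tt g)
      = pinner (Γ1 f) (Γt0 g) - pinner (Γ0 f) (Γt1 g)
  surj_Γ0 : Function.Surjective Γ0
  surj_Γt0 : Function.Surjective Γt0
  A0_adjoint : (T.restrictTo (LinearMap.ker Γ0)).adjoint = Tt.restrictTo (LinearMap.ker Γt0)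
  At0_adjoint : (Tt.restrictTo (LinearMap.ker Γt0)).adjoint = T.restrictTo (LinearMap.ker Γ0)

theorem LinearPMap.restrictTo_apply (T : H →ₗ.[ℂ] H) (p : Submodule ℂ T.domain)
    (x : T.domain) (hx : x ∈ p) (hx' : (x : H) ∈ (T.restrictTo p).domain) :
    T.restrictTo p ⟨(x : H), hx'⟩ = T x := by
  have key : (Submodule.equivMapOfInjective T.domain.subtype (Submodule.injective_subtype _)
      p).symm ⟨(x : H), hx'⟩ = ⟨x, hx⟩ := by
    rw [LinearEquiv.symm_apply_eq]
    rfl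
  exact congrArg (fun y : p => T (y : T.domain)) key

/-- The relation `γ(λ)h = (I + (λ - λ₀)(A₀ - λ)⁻¹) γ(λ₀)h`, where `fl = γ(λ)h` and `f0 = γ(λ₀)h`. -/
theorem gamma_field_eq (T : H →ₗ.[ℂ] H) (Γ0 : T.domain →ₗ[ℂ] G) (lam0 lam : ℂ) (Rlam : H →L[ℂ] H)
    (hRlam : ResolventAt (T.restrictTo (LinearMap.ker Γ0)) lam Rlam) (fl f0 : T.domain)
    (hfl : T fl = lam • (fl : H)) (hf0 : T f0 = lam0 • (f0 : H)) (hΓ : Γ0 fl = Γ0 f0) :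
    (fl : H) = (f0 : H) + (lam - lam0) • Rlam (f0 : H) := by
  have hker : fl - f0 ∈ LinearMap.ker Γ0 := by simp [hΓ]
  have hdom : ((fl - f0 : T.domain) : H) ∈ (T.restrictTo (LinearMap.ker Γ0)).domain :=
    ⟨fl - f0, hker, rfl⟩
  have hR := hRlam.1 ⟨_, hdom⟩
  rw [LinearPMap.restrictTo_apply T _ _ hker hdom, LinearPMap.map_sub, hfl, hf0] at hR
  have harg : lam • (fl : H) - lam0 • (f0 : H) - lam • ((fl - f0 : T.domain) : H)
      = (lam - lam0) • (f0 : H) := by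
    rw [Submodule.coe_sub]
    module
  rw [harg, map_smul] at hR
  rw [hR, Submodule.coe_sub]
  abel

theorem stmt11
    (S St T Tt : H →ₗ.[ℂ] H)
    (Γ0 Γ1 : T.domain →ₗ[ℂ] G) (Γt0 Γt1 : Tt.domain →ₗ[ℂ] G)
    (hgbt : IsGeneralizedBoundaryTriple S St T Tt Γ0 Γ1 Γt0 Γt1)
    (lam0 lam : ℂ) (Rlam : H →L[ℂ] H)
    (hlam0 : InResolventSet (T.restrictTo (LinearMap.ker Γ0)) lam0)
    (hlam0t : InResolventSet (Tt.restrictTo (LinearMap.ker Γt0)) lam0)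
    (hRlam : ResolventAt (T.restrictTo (LinearMap.ker Γ0)) lam Rlam) :
    ∀ (h k : G) (fl f0 : T.domain) (g0 : Tt.domain),
      T fl = lam • (fl : H) → Γ0 fl = h →
      T f0 = lam0 • (f0 : H) → Γ0 f0 = h →
      Tt g0 = lam0 • (g0 : H) → Γt0 g0 = k →
      pinner (Γ1 fl) k
        = pinner h (Γt1 g0)
          + (lam - (starRingEnd ℂ) lam0)
            * pinner ((f0 : H) + (lam - lam0) • Rlam (f0 : H)) ((g0 : H)) := by
  intro h k fl f0 g0 hfl hΓfl hf0 hΓf0 hg0 hΓg0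
  rw [← gamma_field_eq T Γ0 lam0 lam Rlam hRlam fl f0 hfl hf0 (hΓfl.trans hΓf0.symm)]
  have hgreen := hgbt.green fl g0
  rw [hfl, hg0, hΓfl, hΓg0] at hgreen
  simp only [pinner, inner_smul_left, inner_smul_right] at hgreen ⊢
  linear_combination -hgreen

end
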